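/- Let μ be the 2-alternating assignment with m blocks and let i be an even index with 0 ≤ i ≤ 2m−1, so that (i,i+1) is a top-arc crease. Then every valid layer ordering σ of the restriction of μ to faces 0,…,i extends in exactly one way to a valid layer ordering of the restriction of μ to faces 0,…,i+1; that is, there is exactly one valid layer ordering τ of the faces 0,…,i+1 (with respect to the creases (0,1),…,(i,i+1)) such that removing face i+1 from τ yields σ. -/

import Mathlib

/-- A crease direction: mountain or valley. -/
inductive MV : Type
  | M : MV
  | V : MV
deriving DecidableEq

/-- The value `σ(i)` of a layer ordering at face `i`, as a natural number
(`0` if `i` is out of range). -/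
def faceVal {n : ℕ} (σ : Equiv.Perm (Fin n)) (i : ℕ) : ℕ :=
  if h : i < n then (σ ⟨i, h⟩ : Fin n) else 0

/-- Condition (1): the layer ordering respects the mountain–valley assignment. -/
def MVRelations (n : ℕ) (μ : ℕ → MV) (σ : Equiv.Perm (Fin n)) : Prop :=
  ∀ i, i + 1 < n →
    if (μ i = MV.M ∧ Even i) ∨ (μ i = MV.V ∧ Odd i)
    then faceVal σ (i + 1) < faceVal σ i
    else faceVal σ i < faceVal σ (i + 1)

/-- `x` lies strictly between `lo` and `hi` (in either order). -/
def StrictlyBetween (x a b : ℕ) : Prop := min a b < x ∧ x < max a b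

/-- Condition (2): no two creases on the same side cross. -/
def NoCrossings (n : ℕ) (σ : Equiv.Perm (Fin n)) : Prop :=
  ∀ i j, i + 1 < n → j + 1 < n → i % 2 = j % 2 →
    ¬ Xor' (StrictlyBetween (faceVal σ j) (faceVal σ i) (faceVal σ (i + 1)))
           (StrictlyBetween (faceVal σ (j + 1)) (faceVal σ i) (faceVal σ (i + 1)))

/-- A valid layer ordering for the MV assignment `μ` on the `1 × n` strip. -/
def ValidLayerOrdering (n : ℕ) (μ : ℕ → MV) (σ : Equiv.Perm (Fin n)) : Prop :=
  MVRelations n μ σ ∧ NoCrossings n σ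

/-- `c(μ)`: the number of valid layer orderings for `μ` on the `1 × n` strip. -/
noncomputable def foldCount (n : ℕ) (μ : ℕ → MV) : ℕ :=
  Nat.card {σ : Equiv.Perm (Fin n) // ValidLayerOrdering n μ σ}

/-- The 2-alternating assignment: crease `(k,k+1)` is `M` if `⌊k/2⌋` is even, `V` otherwise. -/
def twoAlt : ℕ → MV := fun k => if Even (k / 2) then MV.M else MV.V

open Finset

/-- Inversion indicator modulo 2. -/
def invZ (g : ℕ → ℤ) (x y : ℕ) : ZMod 2 := if g y < g x then 1 else 0

/-- Number of inversions of `g` on `0, …, n-1`, modulo 2. -/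
def invSum (g : ℕ → ℤ) (n : ℕ) : ZMod 2 := ∑ y ∈ range n, ∑ x ∈ range y, invZ g x y

lemma invSum_succ (g : ℕ → ℤ) (n : ℕ) :
    invSum g (n + 1) = invSum g n + ∑ x ∈ range n, invZ g x n := by
  simp [invSum, sum_range_succ]

lemma invSum_succ' (g : ℕ → ℤ) (n : ℕ) :
    invSum g (n + 1) = invSum (fun x => g (x + 1)) n + ∑ y ∈ range n, invZ g 0 (y + 1) := by
  induction n with
  | zero => simp [invSum]
  | succ n ih =>
    rw [invSum_succ, ih, invSum_succ, sum_range_succ', sum_range_succ _ n]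
    simp only [invZ]
    ring

/-- The two faces `u, v` of an arc are both or neither strictly between `a` and `b`. -/
def NCr (a b u v : ℤ) : Prop :=
  ((a < u ∧ u < b) ∨ (b < u ∧ u < a)) ↔ ((a < v ∧ v < b) ∨ (b < v ∧ v < a))

lemma sum_range_two_mul_aux (h : ℕ → ZMod 2) (r : ℕ) :
    ∑ x ∈ range (2 * r), h x = ∑ k ∈ range r, (h (2 * k) + h (2 * k + 1)) := by
  induction r with
  | zero => simp
  | succ r ih =>
    rw [show 2 * (r + 1) = 2 * r + 1 + 1 by ring, sum_range_succ, sum_range_succ, ih,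
      sum_range_succ]
    ring

lemma invSum_arcs (g : ℕ → ℤ) (r : ℕ)
    (hinj : ∀ x y, x < 2 * r → y < 2 * r → g x = g y → x = y)
    (hnc : ∀ k l, k < r → l < r →
      NCr (g (2 * k)) (g (2 * k + 1)) (g (2 * l)) (g (2 * l + 1))) :
    invSum g (2 * r) = ∑ k ∈ range r, invZ g (2 * k) (2 * k + 1) := by
  induction r with
  | zero => simp [invSum]
  | succ r ih =>
    rw [show 2 * (r + 1) = 2 * r + 1 + 1 by ring, invSum_succ, invSum_succ,
      sum_range_succ _ (2 * r), sum_range_succ _ r,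
      ih (fun x y hx hy => hinj x y (by omega) (by omega))
        (fun k l hk hl => hnc k l (by omega) (by omega))]
    have key : ∑ x ∈ range (2 * r), invZ g x (2 * r) +
        ∑ x ∈ range (2 * r), invZ g x (2 * r + 1) = 0 := by
      rw [← sum_add_distrib, sum_range_two_mul_aux]
      apply sum_eq_zero
      intro k hk
      have hk := mem_range.1 hk
      have h1 := hnc k r (by omega) (by omega)
      have e1 : g (2 * k) ≠ g (2 * r) := fun h => by
        have := hinj _ _ (by omega) (by omega) h; omega
      have e2 : g (2 * k) ≠ g (2 * r + 1) := fun h => by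
        have := hinj _ _ (by omega) (by omega) h; omega
      have e3 : g (2 * k + 1) ≠ g (2 * r) := fun h => by
        have := hinj _ _ (by omega) (by omega) h; omega
      have e4 : g (2 * k + 1) ≠ g (2 * r + 1) := fun h => by
        have := hinj _ _ (by omega) (by omega) h; omega
      unfold NCr at h1
      simp only [invZ]
      split_ifs <;> first | decide | (exfalso; omega)
    linear_combination key

/-- The layer directly below the last face is not the upper end of a top arc. -/
lemma core (f : ℕ → ℤ) (i q : ℕ) (hq : q < i)
    (hinj : ∀ x y, x ≤ i → y ≤ i → f x = f y → x = y)
    (hnc : ∀ x y, x < i → y < i → x % 2 = y % 2 → NCr (f x) (f (x + 1)) (f y) (f (y + 1)))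
    (hdir : ∀ k, k < i → (f (k + 1) < f k ↔ (i - k) % 4 ≤ 1))
    (hlt : f q < f i) (hadj : ∀ x, x < i → f x < f i → f x ≤ f q) :
    2 ≤ (i - q) % 4 := by
  by_contra hcon
  set g : ℕ → ℤ := fun x => f (q + x) with hg
  have hxx : ∀ z d, 1 ≤ z → q + z < i → q + d = i → invZ g 0 z + invZ g z d = 1 := by
    intro z d hz hzi hd
    have h1 := hadj (q + z) hzi
    have e1 : f (q + z) ≠ f q := fun h => by
      have := hinj _ _ (by omega) (by omega) h; omega
    have e2 : f (q + z) ≠ f i := fun h => by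
      have := hinj _ _ (by omega) (by omega) h; omega
    simp only [invZ, hg, add_zero, hd]
    split_ifs <;> first | decide | (exfalso; omega)
  have arcs : ∀ a r, q + a + 2 * r ≤ i + 1 → invSum (fun x => g (x + a)) (2 * r) =
      ∑ k ∈ range r, (if (i - (q + a + 2 * k)) % 4 ≤ 1 then (1 : ZMod 2) else 0) := by
    intro a r har
    rw [invSum_arcs]
    · apply sum_congr rfl
      intro k hk
      have hk := mem_range.1 hk
      have := hdir (q + a + 2 * k) (by omega)
      simp only [invZ, hg]
      rw [show q + (2 * k + 1 + a) = q + a + 2 * k + 1 by ring,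
        show q + (2 * k + a) = q + a + 2 * k by ring]
      simp only [this]
    · intro x y hx hy h
      have := hinj _ _ (by omega) (by omega) h
      omega
    · intro k l hk hl
      have := hnc (q + a + 2 * k) (q + a + 2 * l) (by omega) (by omega) (by omega)
      simp only [hg]
      rw [show q + (2 * k + 1 + a) = q + a + 2 * k + 1 by ring,
        show q + (2 * k + a) = q + a + 2 * k by ring,
        show q + (2 * l + 1 + a) = q + a + 2 * l + 1 by ring,
        show q + (2 * l + a) = q + a + 2 * l by ring]
      exact this
  have two : (2 : ZMod 2) = 0 := by decide
  rcases Nat.even_or_odd' (i - q) with ⟨m, hm | hm⟩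
  · -- same parity
    obtain ⟨p, rfl⟩ : ∃ p, m = p + 1 := ⟨m - 1, by omega⟩
    have A := arcs 0 (p + 1) (by omega)
    have B := arcs 1 (p + 1) (by omega)
    have C := invSum_succ g (2 * (p + 1))
    have D := invSum_succ' g (2 * (p + 1))
    simp only [add_zero] at A
    rw [A] at C
    rw [B, C] at D
    have E : ∑ x ∈ range (2 * (p + 1)), invZ g x (2 * (p + 1)) +
        ∑ y ∈ range (2 * (p + 1)), invZ g 0 (y + 1) = 1 := by
      rw [show range (2 * (p + 1)) = range (2 * p + 1 + 1) by ring_nf]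
      rw [sum_range_succ', sum_range_succ (fun y => invZ g 0 (y + 1))]
      have : ∑ x ∈ range (2 * p + 1), invZ g (x + 1) (2 * (p + 1)) +
        ∑ y ∈ range (2 * p + 1), invZ g 0 (y + 1) = 1 := by
        rw [← sum_add_distrib, sum_congr rfl (g := fun _ => (1 : ZMod 2))]
        · simp [two]
        · intro x hx
          have hx := mem_range.1 hx
          rw [add_comm]
          exact hxx _ _ (by omega) (by omega) (by omega)
      rw [show 2 * (p + 1) = 2 * p + 1 + 1 by ring] at this ⊢
      linear_combination this + invZ g 0 (2 * p + 1 + 1) * two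
    have F : ∑ k ∈ range (p + 1), (if (i - (q + 2 * k)) % 4 ≤ 1 then (1 : ZMod 2) else 0) +
        ∑ k ∈ range (p + 1), (if (i - (q + 1 + 2 * k)) % 4 ≤ 1 then (1 : ZMod 2) else 0) = 0 := by
      rw [← sum_add_distrib, sum_congr rfl (g := fun _ => (1 : ZMod 2))]
      · obtain ⟨t, ht⟩ : ∃ t, p + 1 = 2 * t := ⟨(p + 1) / 2, by omega⟩
        rw [ht]
        simp [two]
      · intro k hk
        have hk := mem_range.1 hk
        split_ifs <;> first | decide | (exfalso; omega)
    have : (1 : ZMod 2) = 0 := by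
      linear_combination D + F - E + (∑ y ∈ range (2 * (p + 1)), invZ g 0 (y + 1) -
        ∑ k ∈ range (p + 1), (if (i - (q + 2 * k)) % 4 ≤ 1 then (1 : ZMod 2) else 0)) * two
    exact absurd this (by decide)
  · have A := arcs 0 (m + 1) (by omega)
    have B := arcs 1 m (by omega)
    have C := invSum_succ g (2 * m + 1)
    have D := invSum_succ' g (2 * m)
    simp only [add_zero] at A
    rw [show 2 * (m + 1) = 2 * m + 1 + 1 by ring, C, D, B, sum_range_succ', sum_range_succ] at A
    have E : ∑ x ∈ range (2 * m), invZ g 0 (x + 1) +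
        ∑ x ∈ range (2 * m), invZ g (x + 1) (2 * m + 1) = 0 := by
      rw [← sum_add_distrib, sum_congr rfl (g := fun _ => (1 : ZMod 2))]
      · simp [two]
      · intro x hx
        have hx := mem_range.1 hx
        exact hxx _ _ (by omega) (by omega) (by omega)
    have F : ∑ k ∈ range m, (if (i - (q + 2 * k)) % 4 ≤ 1 then (1 : ZMod 2) else 0) =
        ∑ k ∈ range m, (if (i - (q + 1 + 2 * k)) % 4 ≤ 1 then (1 : ZMod 2) else 0) := by
      apply sum_congr rfl
      intro k hk
      have hk := mem_range.1 hk
      split_ifs <;> first | rfl | (exfalso; omega)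
    have G : invZ g 0 (2 * m + 1) = 0 := by
      simp only [invZ, hg, add_zero]
      rw [show q + (2 * m + 1) = i by omega, if_neg (by omega)]
    rw [if_pos (by omega), G] at A
    have : (1 : ZMod 2) = 0 := by
      linear_combination E - A - F
    exact absurd this (by decide)

/-- The new face is placed directly next to face `i`. -/
lemma forced (f : ℕ → ℤ) (i : ℕ) (hi : i % 2 = 0)
    (hinj : ∀ x y, x ≤ i + 1 → y ≤ i + 1 → f x = f y → x = y)
    (hnc : ∀ x y, x ≤ i → y ≤ i → x % 2 = y % 2 → NCr (f x) (f (x + 1)) (f y) (f (y + 1)))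
    (hdir : ∀ k, k ≤ i → (f (k + 1) < f k ↔ (i - k) % 4 ≤ 1)) :
    ∀ x, x < i → (f x < f i ↔ f x < f (i + 1)) := by
  intro x hx
  have h0 := hdir i le_rfl
  simp only [Nat.sub_self, Nat.zero_mod, zero_le, iff_true] at h0
  refine ⟨fun hxi => ?_, fun h => h.trans h0⟩
  by_contra hcon
  obtain ⟨q, hqm, hq⟩ := exists_max_image ((range i).filter fun y => f y < f i) f
    ⟨x, by simp [hx, hxi]⟩
  simp only [mem_filter, mem_range, and_imp] at hqm hq
  have hqx := hq x hx hxi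
  have e1 : f x ≠ f (i + 1) := fun h => by
    have := hinj _ _ (by omega) (by omega) h; omega
  have hc := core f i q hqm.1 (fun x y hx hy => hinj x y (by omega) (by omega))
    (fun x y hx hy => hnc x y (by omega) (by omega))
    (fun k hk => hdir k (by omega)) hqm.2 hq
  have hpar : q % 2 = 0 ∨ q % 2 = 1 := by omega
  rcases hpar with hp | hp
  · have hd := hdir q (by omega)
    have hn := hnc i q le_rfl (by omega) (by omega)
    have e2 : f (q + 1) ≠ f q := fun h => by
      have := hinj _ _ (by omega) (by omega) h; omega
    have e3 : f (q + 1) ≠ f i := fun h => by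
      have := hinj _ _ (by omega) (by omega) h; omega
    have hm := hq (q + 1) (by omega)
    unfold NCr at hn
    omega
  · obtain ⟨p, rfl⟩ : ∃ p, q = p + 1 := ⟨q - 1, by omega⟩
    have hd := hdir p (by omega)
    have hn := hnc i p le_rfl (by omega) (by omega)
    have e3 : f p ≠ f i := fun h => by
      have := hinj _ _ (by omega) (by omega) h; omega
    have hm := hq p (by omega)
    unfold NCr at hn
    omega

lemma faceVal_inj {n : ℕ} (σ : Equiv.Perm (Fin n)) (x y : ℕ) (hx : x < n) (hy : y < n)
    (h : faceVal σ x = faceVal σ y) : x = y := by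
  simp only [faceVal, hx, hy, dif_pos] at h
  have := σ.injective (Fin.ext h)
  simpa using this

lemma nocross_NCr {n : ℕ} {σ : Equiv.Perm (Fin n)} (h : NoCrossings n σ) (x y : ℕ)
    (hx : x + 1 < n) (hy : y + 1 < n) (hxy : x % 2 = y % 2) :
    NCr (faceVal σ x) (faceVal σ (x + 1)) (faceVal σ y) (faceVal σ (y + 1)) := by
  have := h x y hx hy hxy
  simp only [Xor', Xor, StrictlyBetween] at this
  unfold NCr
  omega

lemma NCr_nocross {a b u v : ℕ} (h : NCr a b u v) :
    ¬ Xor' (StrictlyBetween u a b) (StrictlyBetween v a b) := by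
  simp only [Xor', Xor, StrictlyBetween]
  unfold NCr at h
  omega

lemma twoAlt_cond (k : ℕ) :
    ((twoAlt k = MV.M ∧ Even k) ∨ (twoAlt k = MV.V ∧ Odd k)) ↔ (k % 4 = 0 ∨ k % 4 = 3) := by
  by_cases h : Even (k / 2)
  · simp only [twoAlt, h, if_true, true_and, reduceCtorEq, false_and, or_false]
    rw [Nat.even_iff] at *
    omega
  · simp only [twoAlt, h, if_false, true_and, reduceCtorEq, false_and, false_or]
    rw [Nat.even_iff] at h
    rw [Nat.odd_iff]
    omega

lemma rel_iff {n : ℕ} (σ : Equiv.Perm (Fin n)) :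
    MVRelations n twoAlt σ ↔
      ∀ k, k + 1 < n → (faceVal σ (k + 1) < faceVal σ k ↔ (k % 4 = 0 ∨ k % 4 = 3)) := by
  unfold MVRelations
  simp only [twoAlt_cond]
  refine forall_congr' fun k => forall_congr' fun hk => ?_
  have : faceVal σ k ≠ faceVal σ (k + 1) := fun h => by
    have := faceVal_inj σ _ _ (by omega) hk h; omega
  split_ifs <;> omega

lemma forced_perm (i : ℕ) (hi : i % 2 = 0) (τ : Equiv.Perm (Fin (i + 2)))
    (hτ : ValidLayerOrdering (i + 2) twoAlt τ) (x : ℕ) (hx : x < i) :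
    faceVal τ x < faceVal τ i ↔ faceVal τ x < faceVal τ (i + 1) := by
  obtain ⟨h1, h2⟩ := hτ
  rw [rel_iff] at h1
  have ne1 : faceVal τ x ≠ faceVal τ i := fun h => by
    have := faceVal_inj τ _ _ (by omega) (by omega) h; omega
  have ne2 : faceVal τ x ≠ faceVal τ (i + 1) := fun h => by
    have := faceVal_inj τ _ _ (by omega) (by omega) h; omega
  have hc : i % 4 = 0 ∨ i % 4 = 2 := by omega
  rcases hc with hc | hc
  · have := forced (fun k => (faceVal τ k : ℤ)) i hi
      (fun x y hx hy h => faceVal_inj τ x y (by omega) (by omega) (by exact_mod_cast h))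
      (fun x y hx hy hxy => nocross_NCr h2 x y (by omega) (by omega) hxy)
      (fun k hk => by have := h1 k (by omega); omega) x hx
    omega
  · have := forced (fun k => -(faceVal τ k : ℤ)) i hi
      (fun x y hx hy h => faceVal_inj τ x y (by omega) (by omega) (by
        have h : -(faceVal τ x : ℤ) = -(faceVal τ y : ℤ) := h
        omega))
      (fun x y hx hy hxy => by
        have := nocross_NCr h2 x y (by omega) (by omega) hxy
        unfold NCr at this ⊢
        omega)
      (fun k hk => by
        have := h1 k (by omega)
        have : faceVal τ k ≠ faceVal τ (k + 1) := fun h => by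
          have := faceVal_inj τ _ _ (by omega) (by omega) h; omega
        omega) x hx
    omega

lemma perm_ext_lt {n : ℕ} (τ τ' : Equiv.Perm (Fin n))
    (h : ∀ a b, τ a < τ b ↔ τ' a < τ' b) : τ = τ' := by
  let e : Fin n ≃o Fin n :=
    { toEquiv := τ.symm.trans τ'
      map_rel_iff' := by
        intro a b
        have := h (τ.symm b) (τ.symm a)
        simp only [Equiv.apply_symm_apply] at this
        simp only [Equiv.trans_apply]
        rw [← not_lt, ← not_lt, this] }
  have he : e = OrderIso.refl _ := Subsingleton.elim _ _
  ext a
  have := congrArg (fun e : Fin n ≃o Fin n => e (τ a)) he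
  simp [e] at this
  rw [this]

/-- Insert a new last face at layer `c`. -/
noncomputable def insertLast {n : ℕ} (σ : Equiv.Perm (Fin n)) (c : Fin (n + 1)) :
    Equiv.Perm (Fin (n + 1)) :=
  Equiv.ofBijective (Fin.lastCases c (fun a => c.succAbove (σ a)))
    (Finite.injective_iff_bijective.1 (by
      intro a b
      induction a using Fin.lastCases with
      | last =>
        induction b using Fin.lastCases with
        | last => simp
        | cast b => simp [(Fin.succAbove_ne c (σ b)).symm]
      | cast a =>
        induction b using Fin.lastCases with
        | last => simp [Fin.succAbove_ne]
        | cast b => simp))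

lemma insertLast_last {n : ℕ} (σ : Equiv.Perm (Fin n)) (c : Fin (n + 1)) :
    insertLast σ c (Fin.last n) = c := by
  simp [insertLast]

lemma insertLast_cast {n : ℕ} (σ : Equiv.Perm (Fin n)) (c : Fin (n + 1)) (a : Fin n) :
    insertLast σ c a.castSucc = c.succAbove (σ a) := by
  simp [insertLast]

lemma faceVal_insert_last {n : ℕ} (σ : Equiv.Perm (Fin n)) (c : Fin (n + 1)) :
    faceVal (insertLast σ c) n = c := by
  have := insertLast_last σ c
  simp only [faceVal, Nat.lt_succ_self, dif_pos]
  exact congrArg Fin.val this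

lemma faceVal_insert_cast {n : ℕ} (σ : Equiv.Perm (Fin n)) (c : Fin (n + 1)) (x : ℕ)
    (hx : x < n) :
    faceVal (insertLast σ c) x =
      if faceVal σ x < c then faceVal σ x else faceVal σ x + 1 := by
  have := congrArg Fin.val (insertLast_cast σ c ⟨x, hx⟩)
  simp only [faceVal, hx, dif_pos, show x < n + 1 by omega]
  refine this.trans ?_
  rw [Fin.succAbove]
  simp only [Fin.lt_def, Fin.val_castSucc]
  split_ifs <;> simp

/-- Lemma: if `(i, i+1)` is a top arc (i.e. `i` is even) of the 2-alternating
assignment with `m` blocks, then every valid layer ordering of the faces `0, …, i`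
extends to a valid layer ordering of the faces `0, …, i+1` in exactly one way. -/
theorem stmt8 (m i : ℕ) (hm : 1 ≤ m) (hi : i < 2 * m) (hieven : Even i)
    (σ : Equiv.Perm (Fin (i + 1))) (hσ : ValidLayerOrdering (i + 1) twoAlt σ) :
    ∃! τ : Equiv.Perm (Fin (i + 2)),
      ValidLayerOrdering (i + 2) twoAlt τ ∧
      ∀ a b : Fin (i + 1), σ a < σ b ↔ τ a.castSucc < τ b.castSucc := by
  have hpar : i % 2 = 0 := Nat.even_iff.1 hieven
  apply existsUnique_of_exists_of_unique
  · obtain ⟨c, hc⟩ : ∃ c : Fin (i + 2),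
        (c : ℕ) = if i % 4 = 0 then faceVal σ i else faceVal σ i + 1 := by
      have : faceVal σ i < i + 1 := by
        simp only [faceVal, Nat.lt_succ_self, dif_pos]
        exact (σ _).2
      exact ⟨⟨if i % 4 = 0 then faceVal σ i else faceVal σ i + 1, by split_ifs <;> omega⟩, rfl⟩
    obtain ⟨h1, h2⟩ := hσ
    rw [rel_iff] at h1
    have hl := faceVal_insert_last σ c
    have hx := faceVal_insert_cast σ c
    have hii := hx i (by omega)
    have hne : ∀ x, x < i → faceVal σ x ≠ faceVal σ i := fun x hx h => by
      have := faceVal_inj σ _ _ (by omega) (by omega) h; omega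
    refine ⟨insertLast σ c, ⟨?_, ?_⟩, ?_⟩
    · rw [rel_iff]
      intro k hk
      rcases Nat.lt_or_ge k i with hki | hki
      · have a1 := hx k (by omega)
        have a2 := hx (k + 1) (by omega)
        have a3 := h1 k (by omega)
        split_ifs at a1 a2 <;> omega
      · obtain rfl : k = i := by omega
        rw [hl]
        split_ifs at hii hc <;> omega
    · intro x y hxi hyi hxy
      apply NCr_nocross
      rcases Nat.lt_or_ge x i with hxi' | hxi' <;> rcases Nat.lt_or_ge y i with hyi' | hyi'
      · have a1 := hx x (by omega)
        have a2 := hx (x + 1) (by omega)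
        have b1 := hx y (by omega)
        have b2 := hx (y + 1) (by omega)
        have a3 := nocross_NCr h2 x y (by omega) (by omega) hxy
        clear hc hl hii
        unfold NCr at *
        split_ifs at a1 a2 b1 b2 <;> omega
      · obtain rfl : y = i := by omega
        have a1 := hx x (by omega)
        have a2 := hx (x + 1) (by omega)
        have n1 := hne x (by omega)
        have n2 := hne (x + 1) (by omega)
        rw [hl]
        unfold NCr
        split_ifs at hii hc a1 a2 <;> omega
      · obtain rfl : x = i := by omega
        have a1 := hx y (by omega)
        have a2 := hx (y + 1) (by omega)
        have n1 := hne y (by omega)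
        have n2 := hne (y + 1) (by omega)
        rw [hl]
        unfold NCr
        split_ifs at hii hc a1 a2 <;> omega
      · obtain rfl : x = i := by omega
        obtain rfl : y = x := by omega
        unfold NCr
        omega
    · intro a b
      rw [insertLast_cast, insertLast_cast, Fin.succAbove_lt_succAbove_iff]
  · rintro τ τ' ⟨hv, ho⟩ ⟨hv', ho'⟩
    have key : ∀ ρ : Equiv.Perm (Fin (i + 2)), ValidLayerOrdering (i + 2) twoAlt ρ →
        (∀ a b : Fin (i + 1), σ a < σ b ↔ ρ a.castSucc < ρ b.castSucc) →
        ∀ a : Fin (i + 1), ρ a.castSucc < ρ (Fin.last (i + 1)) ↔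
          (if a = Fin.last i then i % 4 = 2 else σ a < σ (Fin.last i)) := by
      intro ρ hρ ho a
      have e : ∀ x : Fin (i + 2), (ρ x : ℕ) = faceVal ρ x := fun x => by simp [faceVal]
      split_ifs with ha
      · subst ha
        have h := (rel_iff ρ).1 hρ.1 i (by omega)
        have ne : faceVal ρ i ≠ faceVal ρ (i + 1) := fun h => by
          have := faceVal_inj ρ _ _ (by omega) (by omega) h; omega
        rw [Fin.lt_def, e, e]
        simp only [Fin.val_castSucc, Fin.val_last]
        omega
      · have hlt : (a : ℕ) < i := by
          have := a.2
          have : (a : ℕ) ≠ i := fun h => ha (Fin.ext h)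
          omega
        have := forced_perm i hpar ρ hρ a hlt
        rw [ho, Fin.lt_def, Fin.lt_def, e, e, e]
        simp only [Fin.val_castSucc, Fin.val_last]
        exact this.symm
    have flip : ∀ ρ : Equiv.Perm (Fin (i + 2)), ∀ a : Fin (i + 1),
        ρ (Fin.last (i + 1)) < ρ a.castSucc ↔ ¬ ρ a.castSucc < ρ (Fin.last (i + 1)) := by
      intro ρ a
      have : ρ a.castSucc ≠ ρ (Fin.last (i + 1)) := fun h =>
        (Fin.castSucc_lt_last a).ne (ρ.injective h)
      rw [not_lt]
      exact ⟨le_of_lt, fun h => lt_of_le_of_ne h this.symm⟩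
    apply perm_ext_lt
    intro a b
    induction a using Fin.lastCases with
    | last =>
      induction b using Fin.lastCases with
      | last => simp
      | cast b => rw [flip, flip, key τ hv ho, key τ' hv' ho']
    | cast a =>
      induction b using Fin.lastCases with
      | last => rw [key τ hv ho, key τ' hv' ho']
      | cast b => rw [← ho, ← ho']
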